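/- arXiv:1203.5485 — 2 statements merged into one kernel-verified Lean document; each statement's English description precedes it below -/
import Mathlib

section
/- (Lemma 1 of the paper.) Let c ≥ 2 and K ≥ 1 be integers, let K_opt ≥ 1 be an integer, and let i ≥ 0 satisfy ⌊K/c^(i+1)⌋ < K_opt ≤ ⌊K/c^i⌋; set K' = ⌊K/c^i⌋. Let A be a finite set (the φ-values selected by the query) and f : A → ℝ≥0 the frequencies of these values in the original table. Then ∑_{a ∈ A} min(f(a), K') ≤ (c + 1/K_opt) · ∑_{a ∈ A} min(f(a), K_opt). Consequently, for an I/O-bound query whose response time is proportional to the number of tuples it reads, the response time of the query running on the family sample with cap K' is at most c + 1/K_opt times its response time on the optimal-sized sample with cap K_opt. -/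
section OrderedSemiring

variable {α R : Type*} [Semiring R] [LinearOrder R] [IsOrderedRing R]

theorem min_le_mul_min {x s t r : R} (hx : 0 ≤ x) (hr : 1 ≤ r) (hts : t ≤ r * s) :
    min x t ≤ r * min x s :=
  calc
    min x t ≤ min (r * x) (r * s) := min_le_min (le_mul_of_one_le_left hx hr) hts
    _ = r * min x s := (mul_min_of_nonneg x s (zero_le_one.trans hr)).symm

theorem sum_min_le_mul_sum_min {A : Finset α} {f : α → R} {s t r : R}
    (hf : ∀ a ∈ A, 0 ≤ f a) (hr : 1 ≤ r) (hts : t ≤ r * s) :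
    ∑ a ∈ A, min (f a) t ≤ r * ∑ a ∈ A, min (f a) s := by
  rw [Finset.mul_sum]
  exact Finset.sum_le_sum fun a ha => min_le_mul_min (hf a ha) hr hts

end OrderedSemiring

theorem div_pow_lt_mul_of_div_pow_succ_lt {c K L i : ℕ} (hc : 0 < c)
    (h : K / c ^ (i + 1) < L) : K / c ^ i < c * L := by
  rwa [pow_succ, ← Nat.div_div_eq_div_mul, Nat.div_lt_iff_lt_mul hc, mul_comm] at h

theorem stmt_3_general {α R : Type*} [Semiring R] [LinearOrder R] [IsOrderedRing R]
    {A : Finset α} {f : α → R} (hf : ∀ a ∈ A, 0 ≤ f a) {c K Kopt i : ℕ} (hc : 1 ≤ c)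
    (h : K / c ^ (i + 1) < Kopt) :
    ∑ a ∈ A, min (f a) ((K / c ^ i : ℕ) : R) ≤ (c : R) * ∑ a ∈ A, min (f a) (Kopt : R) := by
  have hcap : ((K / c ^ i : ℕ) : R) ≤ (c : R) * Kopt := by
    rw [← Nat.cast_mul]
    exact Nat.mono_cast (div_pow_lt_mul_of_div_pow_succ_lt hc h).le
  have hcR : (1 : R) ≤ c := by simpa only [Nat.cast_one] using Nat.mono_cast (α := R) hc
  exact sum_min_le_mul_sum_min hf hcR hcap

/-- Lemma 1 of the paper: the number of tuples read from the family sample with cap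
`K' = ⌊K/c^i⌋` is at most `(c + 1/K_opt)` times the number of tuples read from the
optimal-sized sample with cap `K_opt`, hence the same bound holds for the response
time of an I/O-bound query. -/
theorem stmt_3 {α : Type*} (A : Finset α) (f : α → ℝ) (hf : ∀ a ∈ A, 0 ≤ f a)
    (c K Kopt i : ℕ) (hc : 2 ≤ c) (hK : 1 ≤ K) (hKopt : 1 ≤ Kopt)
    (h1 : K / c ^ (i + 1) < Kopt) (h2 : Kopt ≤ K / c ^ i) :
    ∑ a ∈ A, min (f a) ((K / c ^ i : ℕ) : ℝ) ≤
      ((c : ℝ) + 1 / (Kopt : ℝ)) * ∑ a ∈ A, min (f a) ((Kopt : ℕ) : ℝ) := by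
  have hsum : 0 ≤ ∑ a ∈ A, min (f a) (Kopt : ℝ) :=
    Finset.sum_nonneg fun a ha => le_min (hf a ha) Kopt.cast_nonneg
  calc
    _ ≤ (c : ℝ) * ∑ a ∈ A, min (f a) (Kopt : ℝ) := stmt_3_general hf (by lia) h1
    _ ≤ _ := mul_le_mul_of_nonneg_right (le_add_of_nonneg_right (by positivity)) hsum
end

section
/- (Lemma 2 of the paper.) Let c ≥ 2 and K ≥ 1 be integers, let i ≥ 1, and let K_opt be an integer with c < K_opt and ⌊K/c^i⌋ ≤ K_opt < ⌊K/c^(i−1)⌋. Then √(K_opt / ⌊K/c^i⌋) ≤ 1/√(1/c − 1/K_opt). Consequently, if the standard deviation of a query answer computed from n selected tuples is σ/√n for a constant σ > 0 and the number of selected tuples is proportional to the sample cap, then the standard deviation of the query running on the family sample with cap ⌊K/c^i⌋ is at most 1/√(1/c − 1/K_opt) times its standard deviation on the optimal-sized sample with cap K_opt. -/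
/-!
The optimal cap exceeds the chosen one by little more than a factor `c`: rounding down loses less
than `1`, so `⌊K/c^(i+1)⌋ > K/c^(i+1) - 1 ≥ Kopt/c - 1 = Kopt * (1/c - 1/Kopt)`. Dividing and
taking square roots bounds `√(Kopt/⌊K/c^(i+1)⌋)`, which is exactly the ratio of the two standard
deviations.
-/

theorem div_sub_one_lt_floor_div_of_le {k : Type*} [Field k] [LinearOrder k] [IsStrictOrderedRing k]
    [FloorSemiring k] {c M N : k} (hc : 0 ≤ c) (hNM : N ≤ M) :
    N / c - 1 < (⌊M / c⌋₊ : k) :=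
  calc
    N / c - 1 ≤ M / c - 1 := by gcongr
    _ < ⌊M / c⌋₊ := Nat.sub_one_lt_floor _

theorem floor_cast_div_cast_pow {k : Type*} [Field k] [LinearOrder k] [IsStrictOrderedRing k]
    [FloorSemiring k] (K c i : ℕ) :
    ⌊(K : k) / (c : k) ^ i⌋₊ = K / c ^ i := by
  rw [← Nat.cast_pow, Nat.floor_div_eq_div]

theorem sqrt_div_le_one_div_sqrt_of_div_sub_one_le {c N n : ℝ} (hc : 0 < c) (hcN : c < N)
    (hn : N / c - 1 ≤ n) :
    √(N / n) ≤ 1 / √(1 / c - 1 / N) := by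
  have hN : 0 < N := hc.trans hcN
  have hpos : 0 < N / c - 1 := sub_pos.2 ((one_lt_div hc).2 hcN)
  have hfactor : N / c - 1 = N * (1 / c - 1 / N) := by field_simp
  calc
    √(N / n) ≤ √(N / (N / c - 1)) := by gcongr
    _ = √(1 / (1 / c - 1 / N)) := by rw [hfactor, div_mul_cancel_left₀ hN.ne', one_div (_ - _)]
    _ = 1 / √(1 / c - 1 / N) := by rw [Real.sqrt_div zero_le_one, Real.sqrt_one]

theorem div_sqrt_mul_eq_sqrt_div_mul {lam N : ℝ} (hlam : 0 ≤ lam) (hN : 0 < N) (σ n : ℝ) :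
    σ / √(lam * n) = √(N / n) * (σ / √(lam * N)) := by
  rw [Real.sqrt_mul hlam, Real.sqrt_mul hlam, Real.sqrt_div hN.le]
  field_simp

theorem stmt_5_general {c K Kopt : ℝ} {i : ℕ} (hc : 0 < c) (hcK : c < Kopt)
    (hKopt : Kopt ≤ K / c ^ i) :
    √(Kopt / ⌊K / c ^ (i + 1)⌋₊) ≤ 1 / √(1 / c - 1 / Kopt) ∧
      ∀ σ lam : ℝ, 0 ≤ σ → 0 < lam →
        σ / √(lam * ⌊K / c ^ (i + 1)⌋₊) ≤
          (1 / √(1 / c - 1 / Kopt)) * (σ / √(lam * Kopt)) := by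
  have hcap : Kopt / c - 1 < ⌊K / c ^ (i + 1)⌋₊ := by
    rw [pow_succ, ← div_div]
    exact div_sub_one_lt_floor_div_of_le hc.le hKopt
  have hratio := sqrt_div_le_one_div_sqrt_of_div_sub_one_le hc hcK hcap.le
  refine ⟨hratio, fun σ lam hσ hlam ↦ ?_⟩
  rw [div_sqrt_mul_eq_sqrt_div_mul hlam.le (hc.trans hcK) σ]
  gcongr

/-- Lemma 2 of the paper: when `⌊K/c^i⌋ ≤ K_opt < ⌊K/c^(i-1)⌋` and `c < K_opt`,
the standard-deviation blow-up factor `√(K_opt/⌊K/c^i⌋)` is at most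
`1/√(1/c − 1/K_opt)`; consequently, if the standard deviation is `σ/√n` with the
number of selected tuples `n` proportional to the sample cap, the standard deviation
on the family sample with cap `⌊K/c^i⌋` is at most `1/√(1/c − 1/K_opt)` times the
standard deviation on the optimal-sized sample with cap `K_opt`. -/
theorem stmt_5 (c K Kopt i : ℕ) (hc : 2 ≤ c) (hK : 1 ≤ K) (hi : 1 ≤ i)
    (hcK : c < Kopt) (h1 : K / c ^ i ≤ Kopt) (h2 : Kopt < K / c ^ (i - 1)) :
    Real.sqrt ((Kopt : ℝ) / ((K / c ^ i : ℕ) : ℝ)) ≤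
        1 / Real.sqrt (1 / (c : ℝ) - 1 / (Kopt : ℝ)) ∧
      ∀ σ lam : ℝ, 0 < σ → 0 < lam →
        σ / Real.sqrt (lam * ((K / c ^ i : ℕ) : ℝ)) ≤
          (1 / Real.sqrt (1 / (c : ℝ) - 1 / (Kopt : ℝ))) *
            (σ / Real.sqrt (lam * (Kopt : ℝ))) := by
  obtain ⟨j, rfl⟩ := Nat.exists_eq_add_of_le' hi
  have hKopt : (Kopt : ℝ) ≤ K / (c : ℝ) ^ j := by
    exact_mod_cast (Nat.cast_le.2 h2.le).trans Nat.cast_div_le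
  have h := stmt_5_general (Nat.cast_pos.2 (by omega)) (Nat.cast_lt.2 hcK) hKopt
  rw [floor_cast_div_cast_pow] at h
  exact ⟨h.1, fun σ lam hσ ↦ h.2 σ lam hσ.le⟩
end
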